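/- arXiv:1809.05460 — 3 statements merged into one kernel-verified Lean document; each statement's English description precedes it below -/
import Mathlib

section
/- Let G ⊆ UT(n,ℝ) be a real unipotent group and let H ⊆ G be a real algebraic subgroup. Then there exists a closed semialgebraic set A ⊆ G such that the map f : A × H → G given by f(a,h) = a·h is a bijection and a homeomorphism (where A, H and G carry the subspace topologies from ℝ^{n²}), and moreover f and its inverse are smooth: f is the restriction of a polynomial map, and the two component maps of f⁻¹ : G → A × H are infinitely differentiable on G (they are restrictions to G of C^∞ maps, in the sense of ContDiffOn). -/
open Pointwise Filter

noncomputable section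

/-- Square matrices of size `n` over `R`. -/
abbrev Mat (n : ℕ) (R : Type) : Type := Matrix (Fin n) (Fin n) R

/-- The set `UT(n,ℝ)` of upper triangular matrices with `1`s on the diagonal. -/
def UTset (n : ℕ) : Set (Mat n ℝ) :=
  {A | (∀ i, A i i = 1) ∧ ∀ i j : Fin n, (j : ℕ) < (i : ℕ) → A i j = 0}

/-- The entries of a matrix, as a point of `ℝ^(n²)`. -/
def matEval {n : ℕ} (A : Mat n ℝ) : Fin n × Fin n → ℝ := fun ij => A ij.1 ij.2

/-- A real unipotent group: a subgroup of `UT(n,ℝ)` which is the common zero set in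
`UT(n,ℝ)` of a family of real polynomials in the matrix entries. -/
def IsRealUnipotentGroup (n : ℕ) (G : Set (Mat n ℝ)) : Prop :=
  (∃ S : Set (MvPolynomial (Fin n × Fin n) ℝ),
      G = {A | A ∈ UTset n ∧ ∀ p ∈ S, MvPolynomial.eval (matEval A) p = 0}) ∧
    (1 : Mat n ℝ) ∈ G ∧ (∀ a ∈ G, ∀ b ∈ G, a * b ∈ G) ∧ ∀ a ∈ G, a⁻¹ ∈ G

/-- A real algebraic subgroup of a real unipotent group `G`. -/
def IsRealAlgSubgroup (n : ℕ) (G H : Set (Mat n ℝ)) : Prop :=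
  H ⊆ G ∧ IsRealUnipotentGroup n H

/-- `N` is a normal subgroup-set of `G`. -/
def IsNormalIn (n : ℕ) (G N : Set (Mat n ℝ)) : Prop :=
  ∀ g ∈ G, ∀ x ∈ N, g * x * g⁻¹ ∈ N

/-- `Γ` is a lattice in `G`: a discrete subgroup which is cocompact, i.e. there is a
compact `K ⊆ G` with `K·Γ = G` (equivalently, `G/Γ` is compact). -/
def IsLatticeIn (n : ℕ) (G Γ : Set (Mat n ℝ)) : Prop :=
  Γ ⊆ G ∧ (1 : Mat n ℝ) ∈ Γ ∧ (∀ a ∈ Γ, ∀ b ∈ Γ, a * b ∈ Γ) ∧ (∀ a ∈ Γ, a⁻¹ ∈ Γ) ∧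
    DiscreteTopology ↥Γ ∧
    ∃ K : Set (Mat n ℝ), K ⊆ G ∧ IsCompact K ∧ ∀ g ∈ G, ∃ k ∈ K, ∃ γ ∈ Γ, g = k * γ

/-- `H` is `Γ`-rational: `Γ ∩ H` is a lattice in `H`. -/
def IsRationalFor (n : ℕ) (Γ H : Set (Mat n ℝ)) : Prop :=
  IsLatticeIn n H (Γ ∩ H)

/-- The hyperreal matrix represented by a sequence of real matrices. -/
def matOfSeq (n : ℕ) (u : ℕ → Mat n ℝ) : Mat n Hyperreal :=
  Matrix.of fun i j => Hyperreal.ofSeq fun k => u k i j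

/-- The nonstandard extension `S^♯` of a set `S` of real matrices: hyperreal matrices
represented by sequences landing in `S` on a set of indices in the ultrafilter. -/
def matSharp (n : ℕ) (S : Set (Mat n ℝ)) : Set (Mat n Hyperreal) :=
  {A | ∃ u : ℕ → Mat n ℝ, (∀ᶠ k in hyperfilter ℕ, u k ∈ S) ∧ A = matOfSeq n u}

/-- The canonical embedding of real matrices into hyperreal matrices. -/
def matCast {n : ℕ} (A : Mat n ℝ) : Mat n Hyperreal :=
  Matrix.of fun i j => (A i j : Hyperreal)

/-- `μ(G)`: elements of `G^♯` all of whose entries are infinitesimally close to the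
corresponding entries of the identity matrix. -/
def muSet (n : ℕ) (G : Set (Mat n ℝ)) : Set (Mat n Hyperreal) :=
  {A | A ∈ matSharp n G ∧ ∀ i j, Hyperreal.Infinitesimal (A i j - (1 : Mat n Hyperreal) i j)}

/-- The coset `gH` is near `α`, i.e. `α ∈ μ(G)·g·H^♯`. -/
def NearCoset (n : ℕ) (G : Set (Mat n ℝ)) (g : Mat n ℝ) (H : Set (Mat n ℝ))
    (α : Mat n Hyperreal) : Prop :=
  α ∈ muSet n G * ({matCast g} * matSharp n H)

/-- The set of standard parts of the finite elements of a set of hyperreal matrices. -/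
def matStSet (n : ℕ) (A : Set (Mat n Hyperreal)) : Set (Mat n ℝ) :=
  {B | ∃ a ∈ A, ∀ i j, Hyperreal.IsSt (a i j) (B i j)}

/-- A polynomial map `ℝ^d → Mat n ℝ`. -/
def IsPolyMapVec (d n : ℕ) (F : (Fin d → ℝ) → Mat n ℝ) : Prop :=
  ∃ P : Fin n → Fin n → MvPolynomial (Fin d) ℝ,
    ∀ x i j, F x i j = MvPolynomial.eval x (P i j)

/-- The inclusion `ℝ →+* ℝ*` as a ring homomorphism. -/
def realHyperRingHom : ℝ →+* Hyperreal where
  toFun r := (r : Hyperreal)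
  map_one' := Hyperreal.coe_one
  map_mul' := Hyperreal.coe_mul
  map_zero' := Hyperreal.coe_zero
  map_add' := Hyperreal.coe_add

/-- A semialgebraic subset of matrix space: a finite union of sets defined by finitely
many polynomial equations and finitely many strict polynomial inequalities. -/
def IsSemialgebraic (n : ℕ) (S : Set (Mat n ℝ)) : Prop :=
  ∃ (k : ℕ) (P Q : Fin k → Finset (MvPolynomial (Fin n × Fin n) ℝ)),
    S = ⋃ t : Fin k, {A | (∀ p ∈ P t, MvPolynomial.eval (matEval A) p = 0) ∧
      ∀ q ∈ Q t, 0 < MvPolynomial.eval (matEval A) q}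


/-- View a matrix as a point of `ℝ^(n²)`. -/
def toVec {n : ℕ} (A : Mat n ℝ) : Fin n × Fin n → ℝ := fun ij => A ij.1 ij.2

/-- View a point of `ℝ^(n²)` as a matrix. -/
def ofVec {n : ℕ} (v : Fin n × Fin n → ℝ) : Mat n ℝ := Matrix.of fun i j => v (i, j)

/-- Rank of a matrix position: lower rows come first. -/
def posRk {n : ℕ} (i j : Fin n) : ℕ := (n - (i : ℕ)) * n + j

lemma posRk_lt {n : ℕ} {i i' : Fin n} (h : i < i') (j j' : Fin n) : posRk i' j' < posRk i j := by
  unfold posRk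
  have h1 : (n - (i' : ℕ)) + 1 ≤ n - (i : ℕ) := by
    have := i'.2
    have : (i : ℕ) < i' := h
    omega
  have h2 := Nat.mul_le_mul_right n h1
  have := j'.2
  rw [Nat.add_mul] at h2
  omega

lemma posRk_inj {n : ℕ} {i i' j j' : Fin n} (h : posRk i j = posRk i' j') : i = i' ∧ j = j' := by
  rcases lt_trichotomy i i' with h1 | h1 | h1
  · have := posRk_lt h1 j j'
    omega
  · subst h1
    refine ⟨rfl, ?_⟩
    unfold posRk at h
    exact Fin.ext (by omega)
  · have := posRk_lt h1 j' j
    omega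

/-- Additivity of the leading coordinates. -/
lemma lead_add {n : ℕ} {a h : Mat n ℝ} (ha : a ∈ UTset n) {r : ℕ}
    (hh : ∀ i j, posRk i j < r → (h - 1) i j = 0) (i j : Fin n) (hij : posRk i j ≤ r) :
    (a * h - 1) i j = (a - 1) i j + (h - 1) i j := by
  have e : a * h - 1 = (a - 1) + (h - 1) + (a - 1) * (h - 1) := by noncomm_ring
  rw [e, Matrix.add_apply, Matrix.add_apply, Matrix.mul_apply, Finset.sum_eq_zero, add_zero]
  intro k _
  rcases lt_trichotomy i k with h1 | h1 | h1
  · rw [hh k j ((posRk_lt h1 j j).trans_le hij), mul_zero]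
  · subst h1
    simp [ha.1]
  · have : a i k = 0 := ha.2 i k h1
    simp [this, Matrix.one_apply_ne (ne_of_gt h1)]

lemma ut_det {n : ℕ} {a : Mat n ℝ} (ha : a ∈ UTset n) : a.det = 1 := by
  rw [Matrix.det_of_isUpperTriangular (fun i j hij => ha.2 i j hij)]
  simp [ha.1]

lemma ut_inv {n : ℕ} {a : Mat n ℝ} (ha : a ∈ UTset n) : a⁻¹ = a.adjugate := by
  simp [Matrix.inv_def, ut_det ha]

lemma ut_nilp {n : ℕ} {a : Mat n ℝ} (ha : a ∈ UTset n) : (a - 1) ^ n = 0 := by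
  have h1 : (a - 1).IsUpperTriangular := by
    intro i j hij
    have hij' : j < i := hij
    have : a i j = 0 := ha.2 i j hij'
    simp [this, Matrix.one_apply_ne (ne_of_gt hij')]
  have h2 := Matrix.charpoly_of_isUpperTriangular _ h1
  have h3 := Matrix.aeval_self_charpoly (a - 1)
  rw [h2] at h3
  simpa [ha.1] using h3

/-- Powers of a unipotent matrix are polynomial in the exponent. -/
lemma pow_poly {n : ℕ} {a : Mat n ℝ} (ha : a ∈ UTset n) :
    ∃ P : Fin n → Fin n → Polynomial ℝ, ∀ (m : ℕ) i j, (P i j).eval (m : ℝ) = (a ^ m) i j := by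
  refine ⟨fun i j => ∑ k ∈ Finset.range n,
    Polynomial.C (((a - 1) ^ k) i j / (k.factorial : ℝ)) * descPochhammer ℝ k, ?_⟩
  intro m i j
  have e : a ^ m = ∑ k ∈ Finset.range n, (m.choose k : ℝ) • (a - 1) ^ k := by
    have e1 : a ^ m = ∑ k ∈ Finset.range (m + 1), (m.choose k : ℝ) • (a - 1) ^ k := by
      conv_lhs => rw [← sub_add_cancel a 1, (Commute.one_right (a - 1)).add_pow]
      refine Finset.sum_congr rfl fun k _ => ?_
      rw [one_pow, mul_one, ← nsmul_eq_mul', Nat.cast_smul_eq_nsmul]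
    have hz : ∀ k, n ≤ k → (a - 1) ^ k = 0 := fun k hk => pow_eq_zero_of_le hk (ut_nilp ha)
    have e2 : ∑ k ∈ Finset.range (m + 1), (m.choose k : ℝ) • (a - 1) ^ k
        = ∑ k ∈ Finset.range (m + 1 + n), (m.choose k : ℝ) • (a - 1) ^ k := by
      refine Finset.sum_subset (Finset.range_mono (by omega)) fun k _ hk => ?_
      rw [Nat.choose_eq_zero_of_lt (by simpa using hk)]
      simp
    rw [e1, e2]
    symm
    refine Finset.sum_subset (Finset.range_mono (by omega)) fun k _ hk => ?_
    rw [hz k (by simpa using hk), smul_zero]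
  rw [e, Matrix.sum_apply, Polynomial.eval_finsetSum]
  refine Finset.sum_congr rfl fun k _ => ?_
  rw [Matrix.smul_apply, Nat.cast_choose_eq_descPochhammer_div ℝ]
  simp only [Polynomial.eval_mul, Polynomial.eval_C, smul_eq_mul]
  ring

lemma poly_eq_of_nat {p q : Polynomial ℝ} (h : ∀ m : ℕ, p.eval (m : ℝ) = q.eval (m : ℝ)) :
    p = q := by
  apply Polynomial.eq_of_infinite_eval_eq
  refine (Set.infinite_range_of_injective (Nat.cast_injective (R := ℝ))).mono ?_
  rintro _ ⟨m, rfl⟩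
  exact h m

/-- One-parameter subgroup through an element of a unipotent group. -/
lemma one_param {n : ℕ} {H : Set (Mat n ℝ)} (hH : IsRealUnipotentGroup n H) {h : Mat n ℝ}
    (hh : h ∈ H) {r : ℕ} (hr : ∀ i j, posRk i j < r → (h - 1) i j = 0) :
    ∃ P : Fin n → Fin n → Polynomial ℝ, ∀ t : ℝ,
      (Matrix.of fun i j => (P i j).eval t) ∈ H ∧
      ∀ i j, posRk i j ≤ r →
        ((Matrix.of fun i j => (P i j).eval t) - 1 : Mat n ℝ) i j = t * (h - 1) i j := by
  obtain ⟨⟨S, hS⟩, h1, hm, -⟩ := hH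
  have hUT : ∀ a ∈ H, a ∈ UTset n := fun a ha => by rw [hS] at ha; exact ha.1
  obtain ⟨P, hP⟩ := pow_poly (hUT h hh)
  have hpow : ∀ m : ℕ, h ^ m ∈ H := by
    intro m
    induction m with
    | zero => simpa using h1
    | succ m ih => rw [pow_succ]; exact hm _ ih _ hh
  refine ⟨P, fun t => ⟨?_, ?_⟩⟩
  · rw [hS]
    refine ⟨⟨fun i => ?_, fun i j hij => ?_⟩, fun p hp => ?_⟩
    · have : P i i = 1 := poly_eq_of_nat fun m => by
        rw [hP, (hUT _ (hpow m)).1]; simp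
      simp [this]
    · have : P i j = 0 := poly_eq_of_nat fun m => by
        rw [hP, (hUT _ (hpow m)).2 i j hij]; simp
      simp [this]
    · have key : ∀ (p : MvPolynomial (Fin n × Fin n) ℝ) (t : ℝ), (MvPolynomial.aeval (fun q : Fin n × Fin n => P q.1 q.2) p).eval t
          = MvPolynomial.eval (matEval (Matrix.of fun i j => (P i j).eval t)) p := by
        intro p t
        induction p using MvPolynomial.induction_on with
        | C r => simp
        | add p q hp hq => rw [map_add, map_add, Polynomial.eval_add, hp, hq]
        | mul_X p q hp => rw [map_mul, map_mul, Polynomial.eval_mul, hp]; simp [matEval]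
      have : MvPolynomial.aeval (fun q : Fin n × Fin n => P q.1 q.2) p = 0 :=
        poly_eq_of_nat fun m => by
          rw [key]
          have e : (Matrix.of fun i j => (P i j).eval (m : ℝ)) = h ^ m := by
            ext i j
            simp [hP]
          have h3 := hpow m
          rw [hS] at h3
          rw [e, h3.2 p hp]
          simp
      rw [← key, this]
      simp
  · have hlin : ∀ m : ℕ, ∀ i j, posRk i j ≤ r → (h ^ m - 1) i j = m * (h - 1) i j := by
      intro m
      induction m with
      | zero => simp
      | succ m ih =>
        intro i j hij
        rw [pow_succ, lead_add (hUT _ (hpow m)) hr i j hij, ih i j hij]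
        push_cast
        ring
    intro i j hij
    have : P i j = Polynomial.C ((1 : Mat n ℝ) i j) + Polynomial.X * Polynomial.C ((h - 1) i j) :=
      poly_eq_of_nat fun m => by
        have := hlin m i j hij
        rw [hP]
        simp only [Polynomial.eval_add, Polynomial.eval_mul, Polynomial.eval_C, Polynomial.eval_X]
        rw [← this, Matrix.sub_apply]
        ring
    rw [Matrix.sub_apply, Matrix.of_apply, this]
    simp only [Polynomial.eval_add, Polynomial.eval_mul, Polynomial.eval_C, Polynomial.eval_X]
    ring

/-- Positions where `H` has a leading coordinate. -/
def IsJump {n : ℕ} (H : Set (Mat n ℝ)) (i j : Fin n) : Prop :=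
  ∃ h ∈ H, (∀ k l, posRk k l < posRk i j → (h - 1) k l = 0) ∧ (h - 1) i j ≠ 0

/-- Entrywise smoothness of a map between matrix spaces. -/
def MatSm {n : ℕ} (f : Mat n ℝ → Mat n ℝ) : Prop :=
  ∀ i j, ContDiff ℝ (⊤ : ℕ∞) (fun v : Fin n × Fin n → ℝ => f (ofVec v) i j)

lemma MatSm.mul {n : ℕ} {f g : Mat n ℝ → Mat n ℝ} (hf : MatSm f) (hg : MatSm g) :
    MatSm (fun x => f x * g x) := by
  intro i j
  simp only [Matrix.mul_apply]
  exact ContDiff.sum fun k _ => (hf i k).mul (hg k j)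

lemma MatSm.id {n : ℕ} : MatSm (fun x : Mat n ℝ => x) := by
  intro i j
  simp only [ofVec, Matrix.of_apply]
  fun_prop

lemma MatSm.adjugate {n : ℕ} {f : Mat n ℝ → Mat n ℝ} (hf : MatSm f) :
    MatSm (fun x => (f x).adjugate) := by
  intro i j
  simp only [Matrix.adjugate_apply, Matrix.det_apply]
  refine ContDiff.sum fun σ _ => ContDiff.const_smul _ (contDiff_prod fun k _ => ?_)
  by_cases hk : σ k = j
  · simp only [Matrix.updateRow_apply, hk, if_true]
    exact contDiff_const
  · simp only [Matrix.updateRow_apply, hk, if_false]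
    exact hf _ _

lemma MatSm.contDiffOn {n : ℕ} {f : Mat n ℝ → Mat n ℝ} (hf : MatSm f)
    (s : Set (Fin n × Fin n → ℝ)) :
    ContDiffOn ℝ (⊤ : ℕ∞) (fun v => toVec (f (ofVec v))) s := by
  apply ContDiff.contDiffOn
  rw [contDiff_pi]
  rintro ⟨i, j⟩
  exact hf i j

lemma reduce {n : ℕ} {H : Set (Mat n ℝ)} (hH : IsRealUnipotentGroup n H)
    (hmulUT : ∀ a ∈ UTset n, ∀ b ∈ UTset n, a * b ∈ UTset n) (m : ℕ) :
    ∃ φ : Mat n ℝ → Mat n ℝ, MatSm φ ∧ ∀ g ∈ UTset n, φ g ∈ UTset n ∧ (∃ h ∈ H, g = φ g * h) ∧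
      ∀ i j, posRk i j < m → IsJump H i j → (φ g - 1) i j = 0 := by
  have hUT : ∀ a ∈ H, a ∈ UTset n := fun a ha => by
    obtain ⟨⟨S, hS⟩, -⟩ := hH
    rw [hS] at ha; exact ha.1
  induction m with
  | zero => exact ⟨fun x => x, MatSm.id, fun g hg => ⟨hg, ⟨1, hH.2.1, by simp⟩, by simp⟩⟩
  | succ m ih =>
    obtain ⟨φ, hs, hφ⟩ := ih
    by_cases hq : ∃ i j, posRk i j = m ∧ IsJump H i j
    · obtain ⟨i, j, hm, h, hh, h0, hne⟩ := hq
      rw [hm] at h0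
      obtain ⟨P, hP⟩ := one_param hH hh h0
      let c : Mat n ℝ → ℝ := fun g => -((φ g - 1) i j / (h - 1) i j)
      let γ : ℝ → Mat n ℝ := fun t => Matrix.of fun i j => (P i j).eval t
      have hγ : ∀ t, γ t ∈ H := fun t => (hP t).1
      have hγ2 : ∀ t i j, posRk i j ≤ m → (γ t - 1) i j = t * (h - 1) i j := fun t => (hP t).2
      have hγ3 : ∀ t i j, posRk i j < m → (γ t - 1) i j = 0 := fun t i j hij => by
        rw [hγ2 t i j hij.le, h0 i j hij, mul_zero]
      refine ⟨fun g => φ g * γ (c g), hs.mul ?_, ?_⟩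
      · intro k l
        have hc : ContDiff ℝ (⊤ : ℕ∞) (fun v : Fin n × Fin n → ℝ => c (ofVec v)) := by
          simp only [c, Matrix.sub_apply]
          exact (((hs i j).sub contDiff_const).div_const _).neg
        have hp : ContDiff ℝ (⊤ : ℕ∞) (fun t : ℝ => (P k l).eval t) := by
          simpa using (P k l).contDiff_aeval (𝕜 := ℝ) (R := ℝ) (⊤ : ℕ∞)
        exact hp.comp hc
      · intro g hg
        obtain ⟨h1, ⟨k, hk, hgk⟩, h3⟩ := hφ g hg
        refine ⟨hmulUT _ h1 _ (hUT _ (hγ _)), ⟨(γ (c g))⁻¹ * k,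
          hH.2.2.1 _ (hH.2.2.2 _ (hγ _)) _ hk, ?_⟩, ?_⟩
        · have hdet : IsUnit (γ (c g)).det := by rw [ut_det (hUT _ (hγ _))]; exact isUnit_one
          rw [Matrix.mul_assoc, Matrix.mul_nonsing_inv_cancel_left _ _ hdet]
          exact hgk
        · intro i' j' hij hj
          rw [lead_add h1 (hγ3 (c g)) i' j' (by omega)]
          rcases (Nat.lt_succ_iff.1 hij).lt_or_eq with hlt | heq
          · rw [h3 i' j' hlt hj, hγ3 _ i' j' hlt, add_zero]
          · obtain ⟨rfl, rfl⟩ := posRk_inj (heq.trans hm.symm)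
            rw [hγ2 _ _ _ hm.le]
            simp only [c]
            field_simp
            ring
    · refine ⟨φ, hs, fun g hg => ⟨(hφ g hg).1, (hφ g hg).2.1, fun i j hij hj => ?_⟩⟩
      rcases (Nat.lt_succ_iff.1 hij).lt_or_eq with hlt | heq
      · exact (hφ g hg).2.2 i j hlt hj
      · exact absurd ⟨i, j, heq, hj⟩ hq

lemma ut_mul {n : ℕ} (a : Mat n ℝ) (ha : a ∈ UTset n) (b : Mat n ℝ) (hb : b ∈ UTset n) :
    a * b ∈ UTset n := by
  have ta : a.IsUpperTriangular := fun i j hij => ha.2 i j hij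
  have tb : b.IsUpperTriangular := fun i j hij => hb.2 i j hij
  refine ⟨fun i => ?_, fun i j hij => Matrix.BlockTriangular.mul ta tb hij⟩
  rw [Matrix.mul_apply, Finset.sum_eq_single i]
  · rw [ha.1, hb.1, one_mul]
  · intro k _ hk
    rcases lt_or_gt_of_ne hk with h | h
    · rw [ha.2 i k h, zero_mul]
    · rw [hb.2 k i h, mul_zero]
  · simp

lemma zeros_closed {n : ℕ} (S : Set (MvPolynomial (Fin n × Fin n) ℝ)) :
    IsClosed {A : Mat n ℝ | ∀ p ∈ S, MvPolynomial.eval (matEval A) p = 0} := by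
  simp only [Set.ofPred_forall]
  refine isClosed_iInter fun p => isClosed_iInter fun _ => ?_
  have hc : Continuous (fun A : Mat n ℝ => matEval A) := by
    unfold matEval
    exact continuous_pi fun q => continuous_id.matrix_elem q.1 q.2
  exact isClosed_eq ((MvPolynomial.continuous_eval p).comp hc) continuous_const

lemma zeros_semialg {n : ℕ} (S : Set (MvPolynomial (Fin n × Fin n) ℝ)) :
    IsSemialgebraic n {A : Mat n ℝ | ∀ p ∈ S, MvPolynomial.eval (matEval A) p = 0} := by
  obtain ⟨T, hT⟩ : (Ideal.span S).FG := IsNoetherian.noetherian _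
  have key : ∀ (U : Set (MvPolynomial (Fin n × Fin n) ℝ)) (A : Mat n ℝ),
      (∀ p ∈ U, MvPolynomial.eval (matEval A) p = 0) ↔
        Ideal.span U ≤ RingHom.ker (MvPolynomial.eval (matEval A)) := by
    intro U A
    rw [Ideal.span_le]
    rfl
  refine ⟨1, fun _ => T, fun _ => ∅, ?_⟩
  ext A
  have h1 := key S A
  have h2 := key (T : Set _) A
  have hT' : Ideal.span (T : Set (MvPolynomial (Fin n × Fin n) ℝ)) = Ideal.span S := hT
  rw [hT', ← h1] at h2
  simpa using h2.symm

/-- existence of a closed semialgebraic complement `A` to a real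
algebraic subgroup `H ⊆ G`: the multiplication map `A × H → G` is a bijection, it is
the restriction of a polynomial map, and the two components of its inverse are
restrictions to `G` of `C^∞` maps (hence `(a,h) ↦ a·h` is a homeomorphism onto `G`). -/
theorem stmt10 {n : ℕ} (G : Set (Mat n ℝ)) (hG : IsRealUnipotentGroup n G)
    (H : Set (Mat n ℝ)) (hH : IsRealAlgSubgroup n G H) :
    ∃ A : Set (Mat n ℝ), A ⊆ G ∧ IsClosed A ∧ IsSemialgebraic n A ∧
      (∀ g ∈ G, ∃! p : Mat n ℝ × Mat n ℝ, p.1 ∈ A ∧ p.2 ∈ H ∧ g = p.1 * p.2) ∧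
      (∃ P : Fin n → Fin n →
          MvPolynomial ((Fin n × Fin n) ⊕ (Fin n × Fin n)) ℝ,
        ∀ a ∈ A, ∀ h ∈ H, ∀ i j,
          (a * h) i j = MvPolynomial.eval (Sum.elim (matEval a) (matEval h)) (P i j)) ∧
      ∃ φ ψ : Mat n ℝ → Mat n ℝ,
        ContDiffOn ℝ (⊤ : ℕ∞) (fun v => toVec (φ (ofVec v))) (toVec '' G) ∧
        ContDiffOn ℝ (⊤ : ℕ∞) (fun v => toVec (ψ (ofVec v))) (toVec '' G) ∧
        ∀ g ∈ G, φ g ∈ A ∧ ψ g ∈ H ∧ g = φ g * ψ g := by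
  obtain ⟨hHG, hHu⟩ := hH
  obtain ⟨⟨S, hS⟩, hG1, hGm, hGi⟩ := hG
  have hUT : ∀ a ∈ G, a ∈ UTset n := fun a ha => by rw [hS] at ha; exact ha.1
  let S' : Set (MvPolynomial (Fin n × Fin n) ℝ) :=
    {p | p ∈ S ∨ (∃ i, p = MvPolynomial.X (i, i) - 1) ∨
      (∃ i j : Fin n, (j : ℕ) < (i : ℕ) ∧ p = MvPolynomial.X (i, j)) ∨
      ∃ i j, IsJump H i j ∧ p = MvPolynomial.X (i, j) - MvPolynomial.C ((1 : Mat n ℝ) i j)}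
  let A : Set (Mat n ℝ) := {a | a ∈ G ∧ ∀ i j, IsJump H i j → (a - 1) i j = 0}
  have hA : A = {a : Mat n ℝ | ∀ p ∈ S', MvPolynomial.eval (matEval a) p = 0} := by
    ext a
    constructor
    · rintro ⟨ha, hj⟩
      have ha' := ha
      rw [hS] at ha'
      rintro p (hp | ⟨i, rfl⟩ | ⟨i, j, hij, rfl⟩ | ⟨i, j, hij, rfl⟩)
      · exact ha'.2 p hp
      · simp [matEval, ha'.1.1]
      · simp [matEval, ha'.1.2 i j hij]
      · simpa [matEval] using hj i j hij
    · intro h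
      refine ⟨?_, fun i j hij => ?_⟩
      · rw [hS]
        refine ⟨⟨fun i => ?_, fun i j hij => ?_⟩, fun p hp => h p (Or.inl hp)⟩
        · have := h _ (Or.inr (Or.inl ⟨i, rfl⟩))
          simpa [matEval, sub_eq_zero] using this
        · have := h _ (Or.inr (Or.inr (Or.inl ⟨i, j, hij, rfl⟩)))
          simpa [matEval] using this
      · have := h _ (Or.inr (Or.inr (Or.inr ⟨i, j, hij, rfl⟩)))
        simpa [matEval] using this
  obtain ⟨φ, hs, hφ⟩ := reduce hHu ut_mul ((n + 1) * n)
  have hbig : ∀ i j : Fin n, posRk i j < (n + 1) * n := by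
    intro i j
    unfold posRk
    have h1 : (n - (i : ℕ)) * n ≤ n * n := Nat.mul_le_mul_right n (Nat.sub_le _ _)
    have := j.2
    rw [Nat.add_mul]
    omega
  have hcanc : ∀ a ∈ UTset n, IsUnit a.det := fun a ha => by rw [ut_det ha]; exact isUnit_one
  have hmain : ∀ g ∈ G, φ g ∈ A ∧ (φ g).adjugate * g ∈ H ∧ g = φ g * ((φ g).adjugate * g) := by
    intro g hg
    obtain ⟨h1, ⟨h, hh, hgh⟩, h3⟩ := hφ g (hUT g hg)
    have e : (φ g).adjugate * g = h := by
      rw [← ut_inv h1]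
      conv_lhs => rw [hgh]
      have := Matrix.nonsing_inv_mul_cancel_left (φ g) h (hcanc _ h1)
      convert this using 2
      rw [← hgh]
    have hhd := hcanc _ (hUT _ (hHG hh))
    have e2 : φ g = g * h⁻¹ := by
      have := Matrix.mul_nonsing_inv_cancel_right h (φ g) hhd
      rw [← hgh] at this
      exact this.symm
    refine ⟨⟨?_, fun i j hij => h3 i j (hbig i j) hij⟩, ?_, ?_⟩
    · rw [e2]
      exact hGm _ hg _ (hGi _ (hHG hh))
    · rw [e]; exact hh
    · rw [e]; exact hgh
  refine ⟨A, fun a ha => ha.1, ?_, ?_, ?_, ?_, φ, fun g => (φ g).adjugate * g, ?_, ?_, hmain⟩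
  · rw [hA]; exact zeros_closed S'
  · rw [hA]; exact zeros_semialg S'
  · intro g hg
    obtain ⟨m1, m2, m3⟩ := hmain g hg
    refine ⟨(φ g, (φ g).adjugate * g), ⟨m1, m2, m3⟩, ?_⟩
    have uniq : ∀ a ∈ A, ∀ b ∈ A, ∀ h ∈ H, ∀ k ∈ H, a * h = b * k → a = b ∧ h = k := by
      intro a ha b hb h hh k hk hab
      have dk := hcanc _ (hUT _ (hHG hk))
      have da := hcanc _ (hUT _ ha.1)
      set x := h * k⁻¹ with hx
      have hxH : x ∈ H := hHu.2.2.1 _ hh _ (hHu.2.2.2 _ hk)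
      have hb' : b = a * x := by
        rw [hx, ← Matrix.mul_assoc, hab, Matrix.mul_nonsing_inv_cancel_right _ _ dk]
      have hx0 : ∀ r : ℕ, ∀ i j, posRk i j < r → (x - 1) i j = 0 := by
        intro r
        induction r with
        | zero => simp
        | succ r ih =>
          intro i j hij
          by_contra hne
          have hle : posRk i j ≤ r := Nat.lt_succ_iff.1 hij
          have hj : IsJump H i j :=
            ⟨x, hxH, fun k l hkl => ih k l (hkl.trans_le hle), hne⟩
          have e := lead_add (hUT _ ha.1) ih i j hle
          rw [← hb', hb.2 i j hj, ha.2 i j hj, zero_add] at e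
          exact hne e.symm
      have hx1 : x = 1 := by
        ext i j
        have := hx0 _ i j (Nat.lt_succ_self _)
        rw [Matrix.sub_apply] at this
        linarith
      have hab' : a = b := by rw [hb', hx1, Matrix.mul_one]
      refine ⟨hab', ?_⟩
      rw [← hab'] at hab
      have := congrArg (fun y => a⁻¹ * y) hab
      simpa [Matrix.nonsing_inv_mul_cancel_left _ _ da] using this
    rintro ⟨a, h⟩ ⟨ha, hh, hgah⟩
    obtain ⟨e1, e2⟩ := uniq a ha _ m1 h hh _ m2 (hgah.symm.trans m3)
    exact Prod.ext e1 e2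
  · refine ⟨fun i j => ∑ k, MvPolynomial.X (Sum.inl (i, k)) * MvPolynomial.X (Sum.inr (k, j)), ?_⟩
    intro a _ h _ i j
    simp [Matrix.mul_apply, matEval]
  · exact hs.contDiffOn _
  · exact (hs.adjugate.mul MatSm.id).contDiffOn _
end
end

section
/- Let G ⊆ UT(n,ℝ) be a real unipotent group, P a real algebraic subgroup of G, and U ⊆ G a nonempty open subset of G (in the subspace topology). Suppose L is a real algebraic subgroup of G such that g⁻¹Pg ⊆ L for every g ∈ U, and L is contained in every real algebraic subgroup of G that contains g⁻¹Pg for every g ∈ U (i.e. L is the smallest real algebraic subgroup of G containing ⋃_{g∈U} g⁻¹Pg). Then L is normal in G; in particular L equals the smallest normal real algebraic subgroup of G containing P. -/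
open Pointwise Filter

noncomputable section

open Polynomial in
/-- A curve of matrices with polynomial entries. -/
def PolyCurve14 {n : ℕ} (c : ℝ → Mat n ℝ) : Prop :=
  ∃ Q : Matrix (Fin n) (Fin n) (Polynomial ℝ), ∀ t, c t = (Polynomial.evalRingHom t).mapMatrix Q

lemma PolyCurve14.const {n : ℕ} (A : Mat n ℝ) : PolyCurve14 (fun _ => A) := by
  refine ⟨Polynomial.C.mapMatrix A, fun t => ?_⟩
  ext i j
  simp

lemma PolyCurve14.mul {n : ℕ} {c d : ℝ → Mat n ℝ} (hc : PolyCurve14 c) (hd : PolyCurve14 d) :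
    PolyCurve14 (fun t => c t * d t) := by
  obtain ⟨Q, hQ⟩ := hc
  obtain ⟨R, hR⟩ := hd
  refine ⟨Q * R, fun t => ?_⟩
  simp only [map_mul, hQ, hR]

lemma PolyCurve14.adj {n : ℕ} {c : ℝ → Mat n ℝ} (hc : PolyCurve14 c) :
    PolyCurve14 (fun t => (c t).adjugate) := by
  obtain ⟨Q, hQ⟩ := hc
  refine ⟨Q.adjugate, fun t => ?_⟩
  simp only [hQ, RingHom.map_adjugate]

lemma PolyCurve14.eval {n : ℕ} {c : ℝ → Mat n ℝ} (hc : PolyCurve14 c)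
    (p : MvPolynomial (Fin n × Fin n) ℝ) :
    ∃ q : Polynomial ℝ, ∀ t, MvPolynomial.eval (matEval (c t)) p = q.eval t := by
  obtain ⟨Q, hQ⟩ := hc
  refine ⟨MvPolynomial.eval₂ Polynomial.C (fun ij => Q ij.1 ij.2) p, fun t => ?_⟩
  rw [← Polynomial.coe_evalRingHom, MvPolynomial.hom_eval₂]
  have h1 : (Polynomial.evalRingHom t).comp Polynomial.C = RingHom.id ℝ := by
    ext; simp
  rw [h1, hQ, MvPolynomial.eval, MvPolynomial.coe_eval₂Hom]
  rfl

lemma PolyCurve14.continuous {n : ℕ} {c : ℝ → Mat n ℝ} (hc : PolyCurve14 c) :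
    Continuous c := by
  obtain ⟨Q, hQ⟩ := hc
  refine continuous_matrix fun i j => ?_
  have : (fun t => c t i j) = fun t => (Q i j).eval t := by
    ext t; rw [hQ]; simp
  rw [this]
  exact (Q i j).continuous

lemma ut_det14 {n : ℕ} {A : Mat n ℝ} (hA : A ∈ UTset n) : A.det = 1 := by
  have h : A.BlockTriangular id := fun i j hij => hA.2 i j hij
  rw [Matrix.det_of_upperTriangular h]
  simp [hA.1]

lemma ut_inv14 {n : ℕ} {A : Mat n ℝ} (hA : A ∈ UTset n) : A⁻¹ = A.adjugate := by
  rw [Matrix.inv_def, ut_det14 hA]; simp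

lemma ut_nil14 {n : ℕ} {A : Mat n ℝ} (hA : A ∈ UTset n) : (A - 1) ^ n = 0 := by
  have h : A.BlockTriangular id := fun i j hij => hA.2 i j hij
  have h1 := Matrix.charpoly_of_upperTriangular A h
  have h2 := Matrix.aeval_self_charpoly A
  rw [h1] at h2
  simpa [hA.1] using h2

/-- zero sets -/
lemma zero14 {n : ℕ} {G : Set (Mat n ℝ)} (hG : IsRealUnipotentGroup n G) :
    ∃ S : Set (MvPolynomial (Fin n × Fin n) ℝ),
      ∀ A, A ∈ G ↔ ∀ p ∈ S, MvPolynomial.eval (matEval A) p = 0 := by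
  obtain ⟨⟨S, hS⟩, -⟩ := hG
  refine ⟨S ∪ (Set.range (fun i : Fin n => MvPolynomial.X (i, i) - 1)) ∪
    {p | ∃ i j : Fin n, (j : ℕ) < (i : ℕ) ∧ p = MvPolynomial.X (i, j)}, fun A => ?_⟩
  rw [hS]
  constructor
  · rintro ⟨⟨h1, h2⟩, h3⟩ p ((hp | ⟨i, rfl⟩) | ⟨i, j, hij, rfl⟩)
    · exact h3 p hp
    · simp [matEval, h1]
    · simpa [matEval] using h2 i j hij
  · intro h
    refine ⟨⟨fun i => ?_, fun i j hij => ?_⟩, fun p hp => h p (Or.inl (Or.inl hp))⟩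
    · have := h _ (Or.inl (Or.inr ⟨i, rfl⟩))
      simp [matEval] at this
      linarith
    · have := h _ (Or.inr ⟨i, j, hij, rfl⟩)
      simpa [matEval] using this

lemma sub_ut14 {n : ℕ} {G : Set (Mat n ℝ)} (hG : IsRealUnipotentGroup n G) : G ⊆ UTset n := by
  obtain ⟨⟨S, hS⟩, -⟩ := hG
  rw [hS]; exact fun A h => h.1

lemma pow_curve14 {n : ℕ} {h : Mat n ℝ} (hh : h ∈ UTset n) :
    ∃ c : ℝ → Mat n ℝ, PolyCurve14 c ∧ ∀ m : ℕ, c m = h ^ m := by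
  refine ⟨fun t => ∑ k ∈ Finset.range n,
    ((descPochhammer ℝ k).eval t / (k.factorial : ℝ)) • (h - 1) ^ k, ?_, ?_⟩
  · refine ⟨∑ k ∈ Finset.range n,
      (descPochhammer ℝ k * Polynomial.C ((k.factorial : ℝ)⁻¹)) •
        Polynomial.C.mapMatrix ((h - 1) ^ k), fun t => ?_⟩
    ext i j
    simp only [map_sum, Matrix.sum_apply]
    refine Finset.sum_congr rfl fun k _ => ?_
    simp only [RingHom.mapMatrix_apply, Matrix.map_apply, Matrix.smul_apply, smul_eq_mul,
      Polynomial.eval_mul, Polynomial.coe_evalRingHom, Polynomial.eval_C, div_eq_mul_inv]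
  · intro m
    have hp : h ^ m = ∑ k ∈ Finset.range (m + 1), ((m.choose k : ℕ) : ℝ) • (h - 1) ^ k := by
      have := (Commute.one_right (h - 1)).add_pow m
      rw [sub_add_cancel] at this
      rw [this]
      refine Finset.sum_congr rfl fun k _ => ?_
      rw [one_pow, mul_one, Nat.cast_smul_eq_nsmul, nsmul_eq_mul, Nat.cast_comm]
    have e1 : ∀ k, (descPochhammer ℝ k).eval (m : ℝ) / (k.factorial : ℝ) = (m.choose k : ℝ) := by
      intro k
      rw [descPochhammer_eval_eq_descFactorial, Nat.descFactorial_eq_factorial_mul_choose]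
      have : (k.factorial : ℝ) ≠ 0 := by exact_mod_cast k.factorial_ne_zero
      push_cast
      field_simp
    simp only [e1]
    rw [hp]
    have big1 : ∑ k ∈ Finset.range n, ((m.choose k : ℕ) : ℝ) • (h - 1) ^ k =
        ∑ k ∈ Finset.range (n + (m + 1)), ((m.choose k : ℕ) : ℝ) • (h - 1) ^ k := by
      refine Finset.sum_subset (by intro k; simp; omega) fun k _ hk => ?_
      rw [pow_eq_zero_of_le (by simpa using hk) (ut_nil14 hh), smul_zero]
    have big2 : ∑ k ∈ Finset.range (m + 1), ((m.choose k : ℕ) : ℝ) • (h - 1) ^ k =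
        ∑ k ∈ Finset.range (n + (m + 1)), ((m.choose k : ℕ) : ℝ) • (h - 1) ^ k := by
      refine Finset.sum_subset (by intro k; simp; omega) fun k _ hk => ?_
      rw [Nat.choose_eq_zero_of_lt (by simpa using hk)]; simp
    rw [big1, big2]

lemma curve_mem14 {n : ℕ} {G : Set (Mat n ℝ)} (hG : IsRealUnipotentGroup n G)
    {c : ℝ → Mat n ℝ} (hc : PolyCurve14 c) {T : Set ℝ} (hT : T.Infinite)
    (h : ∀ t ∈ T, c t ∈ G) (t : ℝ) : c t ∈ G := by
  obtain ⟨S, hS⟩ := zero14 hG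
  rw [hS]
  intro p hp
  obtain ⟨q, hq⟩ := hc.eval p
  have : q = 0 := by
    refine Polynomial.eq_zero_of_infinite_isRoot q (hT.mono fun s hs => ?_)
    show q.eval s = 0
    rw [← hq]
    exact (hS _).1 (h s hs) p hp
  rw [hq, this, Polynomial.eval_zero]

lemma conj_alg14 {n : ℕ} {G L : Set (Mat n ℝ)} (hG : IsRealUnipotentGroup n G)
    (hL : IsRealAlgSubgroup n G L) {h : Mat n ℝ} (hh : h ∈ G) :
    IsRealAlgSubgroup n G {x | h * x * h⁻¹ ∈ L} := by
  have hu : IsUnit h.det := by rw [ut_det14 (sub_ut14 hG hh)]; exact isUnit_one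
  have hr : ∀ x : Mat n ℝ, h * (h⁻¹ * x) = x := fun x => Matrix.mul_nonsing_inv_cancel_left _ _ hu
  have hl : ∀ x : Mat n ℝ, h⁻¹ * (h * x) = x := fun x => Matrix.nonsing_inv_mul_cancel_left _ _ hu
  have hi : h⁻¹ * h = 1 := Matrix.nonsing_inv_mul _ hu
  have hi' : h * h⁻¹ = 1 := Matrix.mul_nonsing_inv _ hu
  have hsub : {x | h * x * h⁻¹ ∈ L} ⊆ G := by
    intro x hx
    have h1 := hG.2.2.1 _ (hG.2.2.1 _ (hG.2.2.2 h hh) _ (hL.1 hx)) _ hh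
    simpa only [mul_assoc, hl, hi, mul_one] using h1
  refine ⟨hsub, ?_, ?_, ?_, ?_⟩
  · obtain ⟨S, hS⟩ := zero14 hL.2
    let F : Fin n × Fin n → MvPolynomial (Fin n × Fin n) ℝ := fun ij =>
      ∑ b, (∑ a, MvPolynomial.C (h ij.1 a) * MvPolynomial.X (a, b)) * MvPolynomial.C (h⁻¹ b ij.2)
    have hF : ∀ (A : Mat n ℝ) p, MvPolynomial.eval (matEval A) (MvPolynomial.bind₁ F p) =
        MvPolynomial.eval (matEval (h * A * h⁻¹)) p := by
      intro A p
      have : matEval (h * A * h⁻¹) = fun ij => MvPolynomial.eval (matEval A) (F ij) := by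
        ext ij
        simp [F, matEval, Matrix.mul_apply]
      rw [this, MvPolynomial.eval, MvPolynomial.eval₂Hom_bind₁]
      rfl
    refine ⟨(MvPolynomial.bind₁ F) '' S, ?_⟩
    ext A
    constructor
    · intro hA
      refine ⟨sub_ut14 hG (hsub hA), ?_⟩
      rintro _ ⟨p, hp, rfl⟩
      rw [hF]
      exact (hS _).1 hA p hp
    · rintro ⟨-, hA⟩
      refine (hS _).2 fun p hp => ?_
      rw [← hF]
      exact hA _ ⟨p, hp, rfl⟩
  · simpa [hi'] using hL.2.2.1
  · intro a ha b hb
    have := hL.2.2.2.1 _ ha _ hb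
    simpa only [Set.mem_setOf_eq, mul_assoc, hl] using this
  · intro a ha
    have := hL.2.2.2.2 _ ha
    rw [Matrix.mul_inv_rev, Matrix.mul_inv_rev, Matrix.nonsing_inv_nonsing_inv _ hu, ← mul_assoc]
      at this
    exact this

/-- the smallest real algebraic subgroup containing all conjugates
`g⁻¹Pg`, `g ∈ U` (`U` open and nonempty in `G`) is normal in `G`, and equals the
smallest normal real algebraic subgroup containing `P`. -/
theorem stmt14 {n : ℕ} (G P U L : Set (Mat n ℝ)) (hG : IsRealUnipotentGroup n G)
    (hP : IsRealAlgSubgroup n G P) (hUG : U ⊆ G) (hUne : U.Nonempty)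
    (hUopen : ∃ V : Set (Mat n ℝ), IsOpen V ∧ U = V ∩ G)
    (hL : IsRealAlgSubgroup n G L)
    (hconj : ∀ g ∈ U, ∀ x ∈ P, g⁻¹ * x * g ∈ L)
    (hLmin : ∀ M : Set (Mat n ℝ), IsRealAlgSubgroup n G M →
      (∀ g ∈ U, ∀ x ∈ P, g⁻¹ * x * g ∈ M) → L ⊆ M) :
    IsNormalIn n G L ∧ P ⊆ L ∧
      ∀ M : Set (Mat n ℝ), IsRealAlgSubgroup n G M → IsNormalIn n G M → P ⊆ M → L ⊆ M := by
  have key : ∀ g ∈ G, ∀ x ∈ P, g⁻¹ * x * g ∈ L := by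
    intro g hg x hx
    obtain ⟨V, hV, hUV⟩ := hUopen
    obtain ⟨g0, hg0⟩ := hUne
    have hg0G := hUG hg0
    have hu : IsUnit g0.det := by rw [ut_det14 (sub_ut14 hG hg0G)]; exact isUnit_one
    have hh : g0⁻¹ * g ∈ G := hG.2.2.1 _ (hG.2.2.2 _ hg0G) _ hg
    obtain ⟨c, hc, hcm⟩ := pow_curve14 (sub_ut14 hG hh)
    have hpow : ∀ m : ℕ, (g0⁻¹ * g) ^ m ∈ G := by
      intro m
      induction m with
      | zero => simpa using hG.2.1
      | succ k ih => rw [pow_succ]; exact hG.2.2.1 _ ih _ hh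
    have hcG : ∀ t, c t ∈ G := by
      refine curve_mem14 hG hc (Set.infinite_range_of_injective (Nat.cast_injective (R := ℝ))) ?_
      rintro _ ⟨m, rfl⟩
      rw [hcm]; exact hpow m
    have hd : PolyCurve14 (fun t => g0 * c t) := (PolyCurve14.const g0).mul hc
    have hdG : ∀ t, g0 * c t ∈ G := fun t => hG.2.2.1 _ hg0G _ (hcG t)
    have he : PolyCurve14 (fun t => (g0 * c t).adjugate * x * (g0 * c t)) :=
      (hd.adj.mul (PolyCurve14.const x)).mul hd
    have h0 : c 0 = 1 := by simpa using hcm 0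
    have h1 : c 1 = g0⁻¹ * g := by simpa using hcm 1
    have hopen : IsOpen ((fun t => g0 * c t) ⁻¹' V) := hV.preimage hd.continuous
    have hmem : (0 : ℝ) ∈ (fun t => g0 * c t) ⁻¹' V := by
      rw [hUV] at hg0
      simpa [h0] using hg0.1
    have hinf : ((fun t => g0 * c t) ⁻¹' V).Infinite :=
      infinite_of_mem_nhds 0 (hopen.mem_nhds hmem)
    have fin := curve_mem14 hL.2 he hinf (fun t ht => by
      have := hconj (g0 * c t) (by rw [hUV]; exact ⟨ht, hdG t⟩) x hx
      rwa [ut_inv14 (sub_ut14 hG (hdG t))] at this) 1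
    simp only [h1, Matrix.mul_nonsing_inv_cancel_left _ _ hu] at fin
    rwa [ut_inv14 (sub_ut14 hG hg)]
  refine ⟨?_, ?_, ?_⟩
  · intro h hh
    refine hLmin _ (conj_alg14 hG hL hh) fun g hg x hx => ?_
    have hu : IsUnit h.det := by rw [ut_det14 (sub_ut14 hG hh)]; exact isUnit_one
    have := key (g * h⁻¹) (hG.2.2.1 _ (hUG hg) _ (hG.2.2.2 _ hh)) x hx
    rw [Matrix.mul_inv_rev, Matrix.nonsing_inv_nonsing_inv _ hu] at this
    show h * (g⁻¹ * x * g) * h⁻¹ ∈ L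
    simpa only [mul_assoc] using this
  · intro x hx
    simpa using key 1 hG.2.1 x hx
  · intro M hM hN hPM
    refine hLmin M hM fun g hg x hx => ?_
    have hu : IsUnit g.det := by rw [ut_det14 (sub_ut14 hG (hUG hg))]; exact isUnit_one
    have := hN g⁻¹ (hG.2.2.2 _ (hUG hg)) x (hPM hx)
    rwa [Matrix.nonsing_inv_nonsing_inv _ hu] at this
end
end

section
/- Let G ⊆ UT(n,ℝ) be a real unipotent group, P a real algebraic subgroup of G, and let N be the algebraic normal closure of P, i.e. a normal real algebraic subgroup of G containing P that is contained in every normal real algebraic subgroup of G containing P. Let Γ be a lattice in G. Then the set of all g ∈ G with the property that every Γ-rational real algebraic subgroup of G containing g⁻¹Pg also contains N is dense in G. (Equivalently: the set {g ∈ G : (g⁻¹Pg)^Γ = N^Γ} is dense in G, where for a real algebraic subgroup K of G, K^Γ denotes the smallest Γ-rational real algebraic subgroup of G containing K.) -/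
open Pointwise Filter

noncomputable section

open Polynomial in
lemma poly_zero_of_nat (q : ℝ[X]) (h : ∀ m : ℕ, q.eval (m : ℝ) = 0) : q = 0 := by
  apply Polynomial.eq_zero_of_infinite_isRoot
  exact (Set.infinite_range_of_injective (Nat.cast_injective (R := ℝ))).mono
    (by rintro _ ⟨m, rfl⟩; exact h m)

lemma ut_det_s15 {n : ℕ} {A : Mat n ℝ} (h : A ∈ UTset n) : A.det = 1 := by
  rw [Matrix.det_of_upperTriangular]
  · simp [h.1]
  · intro i j hij
    exact h.2 i j hij

lemma ut_inv_s15 {n : ℕ} {A : Mat n ℝ} (h : A ∈ UTset n) : A⁻¹ = A.adjugate := by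
  rw [Matrix.inv_def, ut_det_s15 h]; simp

lemma ut_unit {n : ℕ} {A : Mat n ℝ} (h : A ∈ UTset n) : IsUnit A.det := by
  rw [ut_det_s15 h]; exact isUnit_one

lemma rug_ut {n : ℕ} {H : Set (Mat n ℝ)} (hH : IsRealUnipotentGroup n H) : H ⊆ UTset n := by
  obtain ⟨⟨S, hS⟩, -⟩ := hH
  intro x hx
  rw [hS] at hx
  exact hx.1

lemma strict_pow {n : ℕ} {Z : Mat n ℝ} (h : ∀ i j : Fin n, (j : ℕ) ≤ i → Z i j = 0) (k : ℕ) :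
    ∀ i j : Fin n, (j : ℕ) < i + k → (Z ^ k) i j = 0 := by
  induction k with
  | zero =>
    intro i j hij
    rw [pow_zero, Matrix.one_apply_ne]
    rintro rfl
    simp at hij
  | succ k ih =>
    intro i j hij
    rw [pow_succ, Matrix.mul_apply]
    apply Finset.sum_eq_zero
    intro l _
    by_cases hl : (l : ℕ) < i + k
    · rw [ih i l hl, zero_mul]
    · rw [h l j (by omega), mul_zero]

lemma strict_nilp {n : ℕ} {Z : Mat n ℝ} (h : ∀ i j : Fin n, (j : ℕ) ≤ i → Z i j = 0) (k : ℕ)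
    (hk : n ≤ k) : Z ^ k = 0 := by
  ext i j
  exact strict_pow h k i j (by omega)

open Polynomial in
lemma exists_curve_nat {n : ℕ} {y : Mat n ℝ} (hy : y ∈ UTset n) :
    ∃ Q : Matrix (Fin n) (Fin n) ℝ[X], ∀ m : ℕ, Q.map (eval (m : ℝ)) = y ^ m := by
  refine ⟨Matrix.of fun i j => ∑ k ∈ Finset.range n,
    C (((y - 1) ^ k) i j * ((k.factorial : ℝ))⁻¹) * descPochhammer ℝ k, fun m => ?_⟩
  have hz : ∀ i j : Fin n, (j : ℕ) ≤ i → (y - 1) i j = 0 := by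
    intro i j hij
    rcases hij.lt_or_eq with h | h
    · rw [Matrix.sub_apply, hy.2 i j h, Matrix.one_apply_ne, sub_zero]
      rintro rfl; simp at h
    · have : j = i := Fin.ext h
      subst this
      simp [hy.1]
  have key : y ^ m = ∑ k ∈ Finset.range n, (m.choose k : ℝ) • (y - 1) ^ k := by
    have h1 : y ^ m = ∑ k ∈ Finset.range (m + 1), (m.choose k : ℝ) • (y - 1) ^ k := by
      conv_lhs => rw [show y = (y - 1) + 1 by simp]
      rw [(Commute.one_right (y - 1)).add_pow]
      apply Finset.sum_congr rfl
      intro k _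
      rw [one_pow, mul_one, ← nsmul_eq_mul', Nat.cast_smul_eq_nsmul]
    rw [h1]
    have a1 : ∑ k ∈ Finset.range (m + 1), (m.choose k : ℝ) • (y - 1) ^ k =
        ∑ k ∈ Finset.range (max (m+1) n), (m.choose k : ℝ) • (y - 1) ^ k := by
      apply Finset.sum_subset (by intro x; simp; omega)
      intro k _ hk
      rw [Nat.choose_eq_zero_of_lt (by simpa using hk)]; simp
    have a2 : ∑ k ∈ Finset.range n, (m.choose k : ℝ) • (y - 1) ^ k =
        ∑ k ∈ Finset.range (max (m+1) n), (m.choose k : ℝ) • (y - 1) ^ k := by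
      apply Finset.sum_subset (by intro x; simp; omega)
      intro k _ hk
      rw [strict_nilp hz k (by simpa using hk)]; simp
    rw [a1, a2]
  rw [key]
  ext i j
  simp only [Matrix.map_apply, Matrix.of_apply, eval_finset_sum, eval_mul, eval_C,
    Matrix.sum_apply, Matrix.smul_apply, smul_eq_mul]
  apply Finset.sum_congr rfl
  intro k _
  rw [descPochhammer_eval_eq_descFactorial, Nat.descFactorial_eq_factorial_mul_choose]
  have : (k.factorial : ℝ) ≠ 0 := by positivity
  push_cast
  field_simp

open Polynomial in
/-- Composition of a polynomial function with a polynomial curve. -/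
lemma eval_curve {n : ℕ} (Q : Matrix (Fin n) (Fin n) ℝ[X])
    (p : MvPolynomial (Fin n × Fin n) ℝ) :
    ∃ q : ℝ[X], ∀ t, q.eval t = MvPolynomial.eval (matEval (Q.map (eval t))) p := by
  refine ⟨MvPolynomial.aeval (fun ij : Fin n × Fin n => Q ij.1 ij.2) p, fun t => ?_⟩
  induction p using MvPolynomial.induction_on with
  | C a => simp
  | add p q hp hq => simp [hp, hq]
  | mul_X p i hp => simp [hp, matEval]

open Polynomial in
lemma exists_curve {n : ℕ} {H : Set (Mat n ℝ)} (hH : IsRealUnipotentGroup n H)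
    {y : Mat n ℝ} (hy : y ∈ H) :
    ∃ Q : Matrix (Fin n) (Fin n) ℝ[X], Q.map (eval 0) = 1 ∧ Q.map (eval 1) = y ∧
      ∀ t, Q.map (eval t) ∈ H := by
  obtain ⟨Q, hQ⟩ := exists_curve_nat (rug_ut hH hy)
  refine ⟨Q, by simpa using hQ 0, by simpa using hQ 1, fun t => ?_⟩
  have hm : ∀ m : ℕ, Q.map (eval (m : ℝ)) ∈ H := by
    intro m
    rw [hQ]
    induction m with
    | zero => simpa using hH.2.1
    | succ k ih => rw [pow_succ]; exact hH.2.2.1 _ ih _ hy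
  have hu : ∀ m : ℕ, Q.map (eval (m : ℝ)) ∈ UTset n := fun m => rug_ut hH (hm m)
  obtain ⟨⟨S, hS⟩, -⟩ := hH
  rw [hS] at hm ⊢
  refine ⟨⟨fun i => ?_, fun i j hij => ?_⟩, fun p hp => ?_⟩
  · have : Q i i - 1 = 0 := poly_zero_of_nat _ fun m => by
      have := (hu m).1 i
      simp only [Matrix.map_apply] at this
      simp [this]
    rw [Matrix.map_apply, sub_eq_zero.1 this]; simp
  · have : Q i j = 0 := poly_zero_of_nat _ fun m => by
      have := (hu m).2 i j hij
      simpa only [Matrix.map_apply] using this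
    rw [Matrix.map_apply, this]; simp
  · obtain ⟨q, hq⟩ := eval_curve Q p
    rw [← hq, poly_zero_of_nat q fun m => by rw [hq]; exact (hm m).2 p hp]
    simp

/-- Polynomial functions of weight at most `w` (the entry `(i,j)` has weight `j+1`). -/
inductive WtLe {n : ℕ} : ℕ → (Mat n ℝ → ℝ) → Prop
  | const (w : ℕ) (c : ℝ) : WtLe w (fun _ => c)
  | coord (w : ℕ) (i j : Fin n) (h : (j : ℕ) + 1 ≤ w) : WtLe w (fun x => x i j)
  | add {w : ℕ} {f g : Mat n ℝ → ℝ} : WtLe w f → WtLe w g → WtLe w (fun x => f x + g x)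
  | mul {a b w : ℕ} {f g : Mat n ℝ → ℝ} (h : a + b ≤ w) :
      WtLe a f → WtLe b g → WtLe w (fun x => f x * g x)

lemma WtLe.mono {n : ℕ} {a b : ℕ} {f : Mat n ℝ → ℝ} (h : WtLe a f) (hab : a ≤ b) :
    WtLe b f := by
  induction h generalizing b with
  | const w c => exact .const _ c
  | coord w i j h => exact .coord _ i j (h.trans hab)
  | add _ _ h1 h2 => exact .add (h1 hab) (h2 hab)
  | mul h h1 h2 => exact .mul (h.trans hab) h1 h2

lemma WtLe.sum {n : ℕ} {w : ℕ} {ι : Type} (s : Finset ι) (f : ι → Mat n ℝ → ℝ)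
    (h : ∀ i ∈ s, WtLe w (f i)) : WtLe w (fun x => ∑ i ∈ s, f i x) := by
  classical
  induction s using Finset.induction_on with
  | empty => simpa using WtLe.const w 0
  | insert a s ha ih =>
    simp only [Finset.sum_insert ha]
    exact .add (h a (by simp)) (ih fun i hi => h i (by simp [hi]))

lemma exists_wt {n : ℕ} (p : MvPolynomial (Fin n × Fin n) ℝ) :
    ∃ w, WtLe w (fun x : Mat n ℝ => MvPolynomial.eval (matEval x) p) := by
  induction p using MvPolynomial.induction_on with
  | C a => exact ⟨0, by simpa using WtLe.const 0 a⟩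
  | add p q hp hq =>
    obtain ⟨a, ha⟩ := hp
    obtain ⟨b, hb⟩ := hq
    exact ⟨max a b, by
      simpa using WtLe.add (ha.mono (le_max_left a b)) (hb.mono (le_max_right a b))⟩
  | mul_X p i hp =>
    obtain ⟨a, ha⟩ := hp
    exact ⟨_, by simpa [matEval] using WtLe.mul le_rfl ha (WtLe.coord _ i.1 i.2 le_rfl)⟩

lemma WtLe.poly {n : ℕ} {w : ℕ} {f : Mat n ℝ → ℝ} (h : WtLe w f) :
    ∃ p : MvPolynomial (Fin n × Fin n) ℝ, ∀ x, f x = MvPolynomial.eval (matEval x) p := by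
  induction h with
  | const w c => exact ⟨MvPolynomial.C c, by simp⟩
  | coord w i j h => exact ⟨MvPolynomial.X (i, j), by simp [matEval]⟩
  | add _ _ h1 h2 =>
    obtain ⟨p, hp⟩ := h1
    obtain ⟨q, hq⟩ := h2
    exact ⟨p + q, by simp [hp, hq]⟩
  | mul _ _ _ h1 h2 =>
    obtain ⟨p, hp⟩ := h1
    obtain ⟨q, hq⟩ := h2
    exact ⟨p * q, by simp [hp, hq]⟩

/-- Right translation by a unipotent element changes a polynomial function by lower weight. -/
lemma WtLe.diff {n : ℕ} {w : ℕ} {f : Mat n ℝ → ℝ} (h : WtLe w f) {γ : Mat n ℝ}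
    (hγ : γ ∈ UTset n) :
    (∀ x, f (x * γ) - f x = 0) ∨ ∃ v, v + 1 ≤ w ∧ WtLe v (fun x => f (x * γ) - f x) := by
  induction h with
  | const w c => left; simp
  | coord w i j h =>
    right
    refine ⟨j, h, ?_⟩
    have : (fun x : Mat n ℝ => (x * γ) i j - x i j) =
        fun x => ∑ k ∈ Finset.univ.filter (fun k : Fin n => k < j), x i k * γ k j := by
      funext x
      rw [Matrix.mul_apply, Finset.sum_filter, ← Finset.sum_erase_add _ _ (Finset.mem_univ j),
        ← Finset.sum_erase_add (a := j) _ (fun k => if k < j then _ else _) (Finset.mem_univ j)]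
      simp only [hγ.1, mul_one, lt_irrefl, if_false, add_zero, add_sub_cancel_right]
      apply Finset.sum_congr rfl
      intro k hk
      split_ifs with hkj
      · rfl
      · rw [hγ.2 k j, mul_zero]
        have := Finset.ne_of_mem_erase hk
        have := lt_of_le_of_ne (not_lt.1 hkj) this.symm
        exact this
    rw [this]
    apply WtLe.sum
    intro k hk
    refine WtLe.mul (a := k + 1) (b := 0) ?_ (.coord _ i k le_rfl) (.const _ _)
    have : k < j := by simpa using hk
    simpa using this
  | @add w f g hf hg h1 h2 =>
    have e : ∀ x, (f (x * γ) + g (x * γ)) - (f x + g x) =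
      (f (x * γ) - f x) + (g (x * γ) - g x) := fun x => by ring
    simp only [e]
    rcases h1 with h1 | ⟨a, ha, h1⟩ <;> rcases h2 with h2 | ⟨b, hb, h2⟩
    · left; simp [h1, h2]
    · right; exact ⟨b, hb, by simpa [h1] using h2⟩
    · right; exact ⟨a, ha, by simpa [h2] using h1⟩
    · right
      exact ⟨max a b, by omega, .add (h1.mono (le_max_left _ _)) (h2.mono (le_max_right _ _))⟩
  | @mul a b w f g h hf hg h1 h2 =>
    have e : ∀ x, (f (x * γ) * g (x * γ)) - (f x * g x) =
      (f (x * γ) - f x) * (g x + (g (x * γ) - g x)) + f x * (g (x * γ) - g x) :=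
      fun x => by ring
    simp only [e]
    rcases h1 with h1 | ⟨c, hc, h1⟩ <;> rcases h2 with h2 | ⟨d, hd, h2⟩
    · left; simp [h1, h2]
    · right; exact ⟨a + d, by omega, by simpa [h1] using WtLe.mul le_rfl hf h2⟩
    · right; exact ⟨c + b, by omega, by simpa [h2] using WtLe.mul le_rfl h1 hg⟩
    · right
      refine ⟨w - 1, by omega, ?_⟩
      exact .add (.mul (a := c) (b := b) (by omega) h1 (.add hg (h2.mono (by omega))))
        (.mul (a := a) (b := d) (by omega) hf h2)

lemma cont_eval {n : ℕ} (p : MvPolynomial (Fin n × Fin n) ℝ) :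
    Continuous (fun x : Mat n ℝ => MvPolynomial.eval (matEval x) p) := by
  apply (MvPolynomial.continuous_eval p).comp
  unfold matEval
  fun_prop

open Polynomial in
/-- A lattice is Zariski dense. -/
lemma zdense {n : ℕ} {L Δ : Set (Mat n ℝ)} (hL : IsRealUnipotentGroup n L)
    (hΔ : IsLatticeIn n L Δ) (w : ℕ) : ∀ f : Mat n ℝ → ℝ, WtLe w f → (∀ x ∈ Δ, f x = 0) →
    ∀ x ∈ L, f x = 0 := by
  induction w using Nat.strong_induction_on with
  | _ w ih =>
  intro f hf hz y hy
  obtain ⟨hsub, h1, hmul, -, -, K, hKL, hK, hcov⟩ := hΔ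
  have inv : ∀ γ ∈ Δ, ∀ x ∈ L, f (x * γ) = f x := by
    intro γ hγ x hx
    rcases hf.diff (rug_ut hL (hsub hγ)) with h | ⟨v, hv, h⟩
    · exact sub_eq_zero.1 (h x)
    · apply sub_eq_zero.1
      refine ih v (by omega) _ h ?_ x hx
      intro z hzΔ
      simp [hz _ hzΔ, hz _ (hmul _ hzΔ _ hγ)]
  obtain ⟨p, hp⟩ := hf.poly
  have hbd : ∃ B, ∀ x ∈ L, |f x| ≤ B := by
    obtain ⟨B, hB⟩ := hK.exists_bound_of_continuousOn (cont_eval p).continuousOn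
    refine ⟨B, fun x hx => ?_⟩
    obtain ⟨k, hk, γ, hγ, rfl⟩ := hcov x hx
    rw [inv γ hγ k (hKL hk), hp]
    exact hB k hk
  obtain ⟨B, hB⟩ := hbd
  obtain ⟨Q, hQ0, hQ1, hQ⟩ := exists_curve hL hy
  obtain ⟨q, hq⟩ := eval_curve Q p
  have hdeg : q.degree ≤ 0 := by
    rw [← Polynomial.isBoundedUnder_abs_atTop_iff]
    refine ⟨B, ?_⟩
    simp only [Filter.eventually_map]
    refine Filter.Eventually.of_forall fun t => ?_
    rw [hq, ← hp]
    exact hB _ (hQ t)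
  rw [Polynomial.eq_C_of_degree_le_zero hdeg] at hq
  have e0 := hq 0
  have e1 := hq 1
  rw [hQ0, ← hp, hz _ h1] at e0
  rw [hQ1, ← hp] at e1
  simp only [eval_C] at e0 e1
  rw [← e1, e0]

/-- Zero set of the polynomials of degree at most `d` vanishing on `F`. -/
def ZF (n d : ℕ) (F : Set (Mat n ℝ)) : Set (Mat n ℝ) :=
  {x | x ∈ UTset n ∧ ∀ p : MvPolynomial (Fin n × Fin n) ℝ, p.totalDegree ≤ d →
    (∀ y ∈ F, MvPolynomial.eval (matEval y) p = 0) → MvPolynomial.eval (matEval x) p = 0}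

lemma exists_F {n : ℕ} (d : ℕ) (Δ : Set (Mat n ℝ)) : ∃ F : Finset (Mat n ℝ), ↑F ⊆ Δ ∧
    ∀ p : MvPolynomial (Fin n × Fin n) ℝ, p.totalDegree ≤ d →
      (∀ y ∈ F, MvPolynomial.eval (matEval y) p = 0) →
      ∀ y ∈ Δ, MvPolynomial.eval (matEval y) p = 0 := by
  classical
  let W := MvPolynomial.restrictTotalDegree (Fin n × Fin n) ℝ d
  let ev : Mat n ℝ → Module.Dual ℝ W := fun y =>
    (MvPolynomial.aeval (R := ℝ) (matEval y)).toLinearMap.comp W.subtype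
  have hev : ∀ y p (hp : p ∈ W), ev y ⟨p, hp⟩ = MvPolynomial.eval (matEval y) p := by
    intro y p hp
    simp [ev, MvPolynomial.aeval_eq_eval]
  obtain ⟨T, hT, hTs⟩ := (Submodule.fg_span_iff_fg_span_finset_subset (R := ℝ) (ev '' Δ)).1
    (IsNoetherian.noetherian _)
  obtain ⟨F, hF, rfl⟩ := Finset.subset_set_image_iff.1 hT
  refine ⟨F, hF, fun p hp h y hy => ?_⟩
  have hpW : p ∈ W := (MvPolynomial.mem_restrictTotalDegree _ _ _).2 hp
  rw [← hev y p hpW]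
  have hm : ev y ∈ Submodule.span ℝ ((F.image ev : Finset _) : Set (Module.Dual ℝ W)) := by
    rw [← hTs]; exact Submodule.subset_span ⟨y, hy, rfl⟩
  have hle : Submodule.span ℝ ((F.image ev : Finset _) : Set (Module.Dual ℝ W)) ≤
      LinearMap.ker (Module.Dual.eval ℝ W ⟨p, hpW⟩) := by
    rw [Submodule.span_le]
    intro φ hφ
    simp only [Finset.coe_image, Set.mem_image, Finset.mem_coe] at hφ
    obtain ⟨z, hz, rfl⟩ := hφ
    simp only [SetLike.mem_coe, LinearMap.mem_ker, Module.Dual.eval_apply]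
    rw [hev]; exact h z hz
  have := hle hm
  simpa only [LinearMap.mem_ker, Module.Dual.eval_apply] using this

lemma exists_ZF {n : ℕ} {L Δ : Set (Mat n ℝ)} (hL : IsRealUnipotentGroup n L)
    (hΔ : IsLatticeIn n L Δ) : ∃ (d : ℕ) (F : Finset (Mat n ℝ)), ↑F ⊆ Δ ∧ L = ZF n d F := by
  have hL' := hL
  obtain ⟨⟨S, hS⟩, -⟩ := hL'
  obtain ⟨T, hTS, hT⟩ := (Submodule.fg_span_iff_fg_span_finset_subset (R :=
    MvPolynomial (Fin n × Fin n) ℝ) S).1 (IsNoetherian.noetherian _)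
  obtain ⟨F, hF, hFp⟩ := exists_F (T.sup MvPolynomial.totalDegree) Δ
  refine ⟨T.sup MvPolynomial.totalDegree, F, hF, Set.Subset.antisymm ?_ ?_⟩
  · intro x hx
    refine ⟨rug_ut hL hx, fun p hp h => ?_⟩
    obtain ⟨w, hw⟩ := exists_wt p
    exact zdense hL hΔ w _ hw (hFp p hp h) x hx
  · rintro x ⟨hx, h⟩
    rw [hS]
    refine ⟨hx, fun p hp => ?_⟩
    have hle : Submodule.span (MvPolynomial (Fin n × Fin n) ℝ) (T : Set _) ≤
        RingHom.ker (MvPolynomial.eval (matEval x)) := by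
      rw [Submodule.span_le]
      intro q hq
      refine h q (Finset.le_sup (f := MvPolynomial.totalDegree) hq) ?_
      intro y hy
      have hyL : y ∈ L := hΔ.1 (hF hy)
      rw [hS] at hyL
      exact hyL.2 q (hTS hq)
    rw [← hT] at hle
    exact hle (Submodule.subset_span hp)

lemma lattice_countable {n : ℕ} {G Γ : Set (Mat n ℝ)} (hΓ : IsLatticeIn n G Γ) :
    Γ.Countable := by
  haveI := hΓ.2.2.2.2.1
  haveI : SecondCountableTopology (Mat n ℝ) :=
    inferInstanceAs (SecondCountableTopology (Fin n → Fin n → ℝ))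
  exact countable_of_Lindelof_of_discrete (X := Γ)

lemma rational_countable {n : ℕ} {G Γ : Set (Mat n ℝ)} (hΓ : IsLatticeIn n G Γ) :
    {L | IsRealAlgSubgroup n G L ∧ IsRationalFor n Γ L}.Countable := by
  have hc : {F : Finset (Mat n ℝ) | (F : Set (Mat n ℝ)) ⊆ Γ}.Countable := by
    have := Set.countable_setOf_finite_subset (lattice_countable hΓ)
    refine (this.preimage (f := fun F : Finset (Mat n ℝ) => (F : Set (Mat n ℝ)))
      Finset.coe_injective).mono ?_
    intro F hF
    exact ⟨F.finite_toSet, hF⟩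
  have hc2 : (⋃ d : ℕ, (fun F : Finset (Mat n ℝ) => ZF n d F) ''
      {F : Finset (Mat n ℝ) | (F : Set (Mat n ℝ)) ⊆ Γ}).Countable :=
    Set.countable_iUnion fun d => hc.image _
  refine hc2.mono ?_
  rintro L ⟨hL, hR⟩
  obtain ⟨d, F, hF, rfl⟩ := exists_ZF hL.2 hR
  exact Set.mem_iUnion.2 ⟨d, F, hF.trans Set.inter_subset_left, rfl⟩

/-- The function `g ↦ p(g⁻¹ x g)` in polynomial form. -/
def cj {n : ℕ} (p : MvPolynomial (Fin n × Fin n) ℝ) (x g : Mat n ℝ) : ℝ :=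
  MvPolynomial.eval (matEval (g.adjugate * x * g)) p

lemma cj_cont {n : ℕ} (p : MvPolynomial (Fin n × Fin n) ℝ) (x : Mat n ℝ) :
    Continuous (cj p x) := by
  apply (cont_eval p).comp
  have : Continuous fun g : Mat n ℝ => g.adjugate := continuous_id.matrix_adjugate
  exact (this.matrix_mul continuous_const).matrix_mul continuous_id

open Polynomial in
lemma cj_curve {n : ℕ} (p : MvPolynomial (Fin n × Fin n) ℝ) (x g : Mat n ℝ)
    (Q : Matrix (Fin n) (Fin n) ℝ[X]) :
    ∃ q : ℝ[X], ∀ t, q.eval t = cj p x (g * Q.map (eval t)) := by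
  obtain ⟨q, hq⟩ := eval_curve ((g.map C * Q).adjugate * x.map C * (g.map C * Q)) p
  refine ⟨q, fun t => ?_⟩
  rw [hq, cj]
  have hx : ∀ A : Mat n ℝ, (evalRingHom t).mapMatrix (A.map C) = A := by
    intro A; ext i j; simp
  have hQ : (evalRingHom t).mapMatrix Q = Q.map (eval t) := rfl
  have e : ((g.map C * Q).adjugate * x.map C * (g.map C * Q)).map (eval t) =
      (g * Q.map (eval t)).adjugate * x * (g * Q.map (eval t)) := by
    change (evalRingHom t).mapMatrix _ = _
    rw [map_mul, map_mul, RingHom.map_adjugate, map_mul, hx, hx, hQ]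
  rw [e]

open Polynomial in
lemma cj_dense {n : ℕ} {G : Set (Mat n ℝ)} (hG : IsRealUnipotentGroup n G)
    (p : MvPolynomial (Fin n × Fin n) ℝ) (x : Mat n ℝ) {g0 : Mat n ℝ} (hg0 : g0 ∈ G)
    (h0 : cj p x g0 ≠ 0) : Dense {g : G | cj p x g ≠ 0} := by
  rintro ⟨g, hg⟩
  have hu := ut_unit (rug_ut hG hg)
  obtain ⟨Q, hQ0, hQ1, hQ⟩ := exists_curve hG (hG.2.2.1 _ (hG.2.2.2 _ hg) _ hg0)
  obtain ⟨q, hq⟩ := cj_curve p x g Q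
  have hq0 : q ≠ 0 := by
    rintro rfl
    have := hq 1
    rw [hQ1, ← mul_assoc, Matrix.mul_nonsing_inv _ hu, one_mul] at this
    exact h0 (by simpa using this.symm)
  let c : ℝ → G := fun t => ⟨g * Q.map (eval t), hG.2.2.1 _ hg _ (hQ t)⟩
  have hc : Continuous c := by
    apply Continuous.subtype_mk
    apply continuous_const.matrix_mul
    refine continuous_matrix fun i j => ?_
    exact (Q i j).continuous
  have hc0 : c 0 = ⟨g, hg⟩ := by
    apply Subtype.ext
    simp [c, hQ0]
  rw [← hc0]
  have hd : Dense {t : ℝ | q.eval t ≠ 0} := by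
    have hfin : {t : ℝ | q.IsRoot t}.Finite := by
      by_contra hinf
      exact hq0 (Polynomial.eq_zero_of_infinite_isRoot q hinf)
    exact Set.Countable.dense_compl ℝ (Set.Finite.countable hfin)
  have := image_closure_subset_closure_image hc ⟨0, hd 0, rfl⟩
  refine closure_mono ?_ this
  rintro _ ⟨t, ht, rfl⟩
  change cj p x (g * Q.map (eval t)) ≠ 0
  rw [← hq]; exact ht

lemma conj_ut {n : ℕ} {G : Set (Mat n ℝ)} (hG : IsRealUnipotentGroup n G) {g x : Mat n ℝ}
    (hg : g ∈ G) (hx : x ∈ G) : g⁻¹ * x * g ∈ G :=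
  hG.2.2.1 _ (hG.2.2.1 _ (hG.2.2.2 _ hg) _ hx) _ hg

/-- The normal core is algebraic. -/
lemma core_alg {n : ℕ} {G L : Set (Mat n ℝ)} (hG : IsRealUnipotentGroup n G)
    (hL : IsRealAlgSubgroup n G L) :
    IsRealAlgSubgroup n G {x | x ∈ G ∧ ∀ g ∈ G, g⁻¹ * x * g ∈ L} := by
  refine ⟨fun x hx => hx.1, ?_, ⟨hG.2.1, fun g hg => ?_⟩, ?_, ?_⟩
  · have hG' := hG
    obtain ⟨⟨S, hS⟩, -⟩ := hG'
    have hL' := hL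
    obtain ⟨-, ⟨T, hT⟩, -⟩ := hL'
    let cp : Mat n ℝ → MvPolynomial (Fin n × Fin n) ℝ → MvPolynomial (Fin n × Fin n) ℝ :=
      fun g p => MvPolynomial.bind₁ (fun ij : Fin n × Fin n =>
        ∑ k, (∑ l, MvPolynomial.C (g⁻¹ ij.1 l) * MvPolynomial.X (l, k)) *
          MvPolynomial.C (g k ij.2)) p
    have hcp : ∀ g p x, MvPolynomial.eval (matEval x) (cp g p) =
        MvPolynomial.eval (matEval (g⁻¹ * x * g)) p := by
      intro g p x
      induction p using MvPolynomial.induction_on with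
      | C a => simp [cp]
      | add p q hp hq => simp only [cp, map_add] at *; rw [hp, hq]
      | mul_X p i hp =>
        simp only [cp, map_mul] at *
        rw [hp]
        simp [matEval, Matrix.mul_apply]
    refine ⟨S ∪ {q | ∃ g ∈ G, ∃ p ∈ T, q = cp g p}, ?_⟩
    ext x
    constructor
    · rintro ⟨hx, h⟩
      refine ⟨rug_ut hG hx, ?_⟩
      rintro p (hp | ⟨g, hg, p, hp, rfl⟩)
      · rw [hS] at hx; exact hx.2 p hp
      · rw [hcp]
        have := h g hg
        rw [hT] at this
        exact this.2 p hp
    · rintro ⟨hx, h⟩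
      have hxG : x ∈ G := by
        rw [hS]; exact ⟨hx, fun p hp => h p (Or.inl hp)⟩
      refine ⟨hxG, fun g hg => ?_⟩
      rw [hT]
      refine ⟨rug_ut hG (conj_ut hG hg hxG), fun p hp => ?_⟩
      rw [← hcp]
      exact h _ (Or.inr ⟨g, hg, p, hp, rfl⟩)
  · rw [mul_one, Matrix.nonsing_inv_mul _ (ut_unit (rug_ut hG hg))]
    exact hL.2.2.1
  · rintro a ⟨ha, ha'⟩ b ⟨hb, hb'⟩
    refine ⟨hG.2.2.1 _ ha _ hb, fun g hg => ?_⟩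
    have := hL.2.2.2.1 _ (ha' g hg) _ (hb' g hg)
    have e : g⁻¹ * a * g * (g⁻¹ * b * g) = g⁻¹ * (a * b) * g := by
      have hu := Matrix.mul_nonsing_inv g (ut_unit (rug_ut hG hg))
      calc g⁻¹ * a * g * (g⁻¹ * b * g) = g⁻¹ * a * (g * g⁻¹) * b * g := by noncomm_ring
        _ = _ := by rw [hu]; noncomm_ring
    rwa [e] at this
  · rintro a ⟨ha, ha'⟩
    refine ⟨hG.2.2.2 _ ha, fun g hg => ?_⟩
    have := hL.2.2.2.2 _ (ha' g hg)
    rwa [Matrix.mul_inv_rev, Matrix.mul_inv_rev,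
      Matrix.nonsing_inv_nonsing_inv _ (ut_unit (rug_ut hG hg)), ← mul_assoc] at this

lemma core_normal {n : ℕ} {G L : Set (Mat n ℝ)} (hG : IsRealUnipotentGroup n G) :
    IsNormalIn n G {x | x ∈ G ∧ ∀ g ∈ G, g⁻¹ * x * g ∈ L} := by
  rintro h hh x ⟨hx, hx'⟩
  refine ⟨hG.2.2.1 _ (hG.2.2.1 _ hh _ hx) _ (hG.2.2.2 _ hh), fun g hg => ?_⟩
  have := hx' (h⁻¹ * g) (hG.2.2.1 _ (hG.2.2.2 _ hh) _ hg)
  rw [Matrix.mul_inv_rev, Matrix.nonsing_inv_nonsing_inv _ (ut_unit (rug_ut hG hh))] at this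
  simpa only [mul_assoc] using this

lemma rug_closed {n : ℕ} {G : Set (Mat n ℝ)} (hG : IsRealUnipotentGroup n G) :
    IsClosed G := by
  obtain ⟨⟨S, hS⟩, -⟩ := hG
  have e : G = (⋂ i, {A : Mat n ℝ | A i i = 1}) ∩
      (⋂ i : Fin n, ⋂ j : Fin n, {A : Mat n ℝ | (j : ℕ) < (i : ℕ) → A i j = 0}) ∩
      ⋂ p ∈ S, {A : Mat n ℝ | MvPolynomial.eval (matEval A) p = 0} := by
    rw [hS]; ext A; simp [UTset]
  rw [e]
  refine IsClosed.inter (IsClosed.inter ?_ ?_) ?_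
  · exact isClosed_iInter fun i => isClosed_eq (by fun_prop) continuous_const
  · refine isClosed_iInter fun i => isClosed_iInter fun j => ?_
    by_cases h : (j : ℕ) < i
    · simp only [h, true_imp_iff]
      exact isClosed_eq (by fun_prop) continuous_const
    · simp [h]
  · exact isClosed_biInter fun p _ => isClosed_eq (cont_eval p) continuous_const

theorem stmt15 {n : ℕ} (G P N Γ : Set (Mat n ℝ)) (hG : IsRealUnipotentGroup n G)
    (hP : IsRealAlgSubgroup n G P)
    (hN : IsRealAlgSubgroup n G N) (hNnormal : IsNormalIn n G N) (hPN : P ⊆ N)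
    (hNmin : ∀ M : Set (Mat n ℝ), IsRealAlgSubgroup n G M → IsNormalIn n G M → P ⊆ M →
      N ⊆ M)
    (hΓ : IsLatticeIn n G Γ) :
    ∀ g ∈ G, g ∈ closure {g' | g' ∈ G ∧
      ∀ L : Set (Mat n ℝ), IsRealAlgSubgroup n G L → IsRationalFor n Γ L →
        (∀ x ∈ P, g'⁻¹ * x * g' ∈ L) → N ⊆ L} := by
  classical
  intro g hg
  let B : Set (Set (Mat n ℝ)) :=
    {L | (IsRealAlgSubgroup n G L ∧ IsRationalFor n Γ L) ∧ ¬ N ⊆ L}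
  have hB : B.Countable := (rational_countable hΓ).mono fun L hL => hL.1
  have key : ∀ L : Set (Mat n ℝ), ∃ U : Set G, L ∈ B → IsOpen U ∧ Dense U ∧
      ∀ g' ∈ U, ∃ x ∈ P, (g' : Mat n ℝ)⁻¹ * x * g' ∉ L := by
    intro L
    by_cases hLB : L ∈ B
    swap
    · exact ⟨∅, fun h => absurd h hLB⟩
    obtain ⟨⟨hL, hR⟩, hNL⟩ := hLB
    have hex : ∃ x ∈ P, ∃ g0 ∈ G, g0⁻¹ * x * g0 ∉ L := by
      by_contra! hcon
      apply hNL
      intro y hy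
      have := hNmin _ (core_alg hG hL) (core_normal hG)
        (fun x hx => ⟨hP.1 hx, hcon x hx⟩) hy
      simpa using this.2 1 hG.2.1
    obtain ⟨x, hx, g0, hg0, hnot⟩ := hex
    have hL' := hL
    obtain ⟨-, ⟨S, hS⟩, -⟩ := hL'
    have hp : ∃ p ∈ S, MvPolynomial.eval (matEval (g0⁻¹ * x * g0)) p ≠ 0 := by
      by_contra! hcon
      apply hnot
      rw [hS]
      exact ⟨rug_ut hG (conj_ut hG hg0 (hP.1 hx)), hcon⟩
    obtain ⟨p, hpS, hp⟩ := hp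
    refine ⟨{g : G | cj p x g ≠ 0}, fun _ => ⟨?_, ?_, ?_⟩⟩
    · exact isOpen_ne_fun ((cj_cont p x).comp continuous_subtype_val) continuous_const
    · refine cj_dense hG p x hg0 ?_
      rwa [cj, ← ut_inv_s15 (rug_ut hG hg0)]
    · rintro ⟨g', hg'⟩ hne
      refine ⟨x, hx, fun hmem => hne ?_⟩
      rw [hS] at hmem
      have := hmem.2 p hpS
      rwa [ut_inv_s15 (rug_ut hG hg')] at this
  choose U hU using key
  haveI : LocallyCompactSpace (Mat n ℝ) :=
    inferInstanceAs (LocallyCompactSpace (Fin n → Fin n → ℝ))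
  haveI : LocallyCompactSpace G := (rug_closed hG).isClosedEmbedding_subtypeVal.locallyCompactSpace
  have hD : Dense (⋂ L ∈ B, U L) :=
    dense_biInter_of_isOpen (fun L hL => (hU L hL).1) hB (fun L hL => (hU L hL).2.1)
  have := image_closure_subset_closure_image continuous_subtype_val
    ⟨⟨g, hg⟩, hD ⟨g, hg⟩, rfl⟩
  refine closure_mono ?_ this
  rintro _ ⟨g', hg', rfl⟩
  refine ⟨g'.2, fun L hL hR hsub => ?_⟩
  by_contra hNL
  have hLB : L ∈ B := ⟨⟨hL, hR⟩, hNL⟩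
  obtain ⟨x, hx, hn⟩ := (hU L hLB).2.2 g' (Set.mem_iInter₂.1 hg' L hLB)
  exact hn (hsub x hx)
end
end
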